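/- Let q be a prime power with q > 2^{20} · 10^2 = 104857600. Then for every integer k with 1 < k < q and (k-1) dividing (q-1), not every element of F_q can be written as the sum of a k-potent element, a 3-potent element, and a 4-potent element, i.e., C_k + C_3 + C_4 ≠ F_q. -/

import Mathlib

section

open Polynomial

theorem taylor_hasseDeriv {R : Type*} [CommRing R] (a : R) (j : ℕ) (f : R[X]) :
    taylor a (hasseDeriv j f) = hasseDeriv j (taylor a f) := by
  ext n
  rw [taylor_coeff, hasseDeriv_coeff, taylor_coeff, ← LinearMap.comp_apply, hasseDeriv_comp,
    LinearMap.smul_apply, eval_smul, nsmul_eq_mul, Nat.choose_symm_add]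

theorem X_sub_C_pow_mul_hasseDeriv {R : Type*} [CommRing R] (a : R) (N j : ℕ) :
    (X - C a) ^ j * hasseDeriv j ((X - C a) ^ N) = (X - C a) ^ N * C (N.choose j : R) := by
  apply taylor_injective a
  have h (k : ℕ) : taylor a ((X - C a) ^ k) = X ^ k := by
    simp [taylor_pow]
  rw [taylor_mul, taylor_mul, taylor_hasseDeriv, h, h, taylor_C, ← monomial_one_right_eq_X_pow N,
    hasseDeriv_monomial]
  rcases le_or_gt j N with hj | hj
  · rw [← C_mul_X_pow_eq_monomial, ← C_mul_X_pow_eq_monomial, mul_left_comm, ← pow_add,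
      Nat.add_sub_cancel' hj]
    simp [mul_comm]
  · simp [Nat.choose_eq_zero_of_lt hj]

theorem exists_hasseDeriv_prod_X_sub_C_pow {K : Type*} [Field K] (T : Finset K) (N : K → ℕ)
    (l : ℕ) : ∃ p : K[X], p.natDegree ≤ l * T.card ∧
      (∏ s ∈ T, (X - C s)) ^ l * hasseDeriv l (∏ s ∈ T, (X - C s) ^ N s) =
        (∏ s ∈ T, (X - C s) ^ N s) * p := by
  classical
  induction T using Finset.induction_on generalizing l with
  | empty =>
    rcases Nat.eq_zero_or_pos l with rfl | hl
    · exact ⟨1, by simp, by simp⟩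
    · exact ⟨0, by simp, by simp [hasseDeriv_apply_one _ hl]⟩
  | insert a T ha ih =>
    choose p hdeg hp using ih
    refine ⟨∑ ij ∈ Finset.HasAntidiagonal.antidiagonal l,
        C ((N a).choose ij.1 : K) * (X - C a) ^ ij.2 *
      ((∏ s ∈ T, (X - C s)) ^ ij.1 * p ij.2), ?_, ?_⟩
    · refine natDegree_sum_le_of_forall_le _ _ fun ij hij ↦ ?_
      rw [Finset.HasAntidiagonal.mem_antidiagonal] at hij
      rw [Finset.card_insert_of_notMem ha]
      have h1 : ((X - C a : K[X]) ^ ij.2).natDegree ≤ ij.2 := by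
        simp
      have h2 : ((∏ s ∈ T, (X - C s)) ^ ij.1 : K[X]).natDegree ≤ ij.1 * T.card := by
        refine natDegree_pow_le.trans (Nat.mul_le_mul_left _ ?_)
        rw [natDegree_prod_of_monic _ _ fun s _ ↦ monic_X_sub_C s]
        simp
      calc _ ≤ ij.2 + (ij.1 * T.card + ij.2 * T.card) := by
            refine natDegree_mul_le.trans (add_le_add ?_ ?_)
            · exact (natDegree_C_mul_le _ _).trans h1
            · exact natDegree_mul_le.trans (add_le_add h2 (hdeg _))
        _ ≤ _ := by subst hij; nlinarith
    · rw [Finset.prod_insert ha, Finset.prod_insert ha, hasseDeriv_mul, Finset.mul_sum,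
        Finset.mul_sum]
      refine Finset.sum_congr rfl fun ij hij ↦ ?_
      rw [Finset.HasAntidiagonal.mem_antidiagonal] at hij
      have h1 := X_sub_C_pow_mul_hasseDeriv a (N a) ij.1
      have h2 := hp ij.2
      subst hij
      rw [mul_pow, pow_add, pow_add]
      linear_combination ((X - C a) ^ ij.2 * (∏ s ∈ T, (X - C s)) ^ ij.1 *
        (∏ s ∈ T, (X - C s)) ^ ij.2 * hasseDeriv ij.2 (∏ s ∈ T, (X - C s) ^ N s)) * h1 +
        ((X - C a) ^ N a * C ((N a).choose ij.1 : K) * (X - C a) ^ ij.2 *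
          (∏ s ∈ T, (X - C s)) ^ ij.1) * h2

theorem card_mul_le_natDegree_of_hasseDeriv_eval_eq_zero {K : Type*} [Field K] (R : K[X])
    (hR : R ≠ 0) (M : ℕ) (A : Finset K)
    (h : ∀ x ∈ A, ∀ l < M, (hasseDeriv l R).eval x = 0) : A.card * M ≤ R.natDegree := by
  have hdvd : ∏ x ∈ A, (X - C x) ^ M ∣ R := by
    refine Finset.prod_dvd_of_coprime (fun x _ y _ hxy ↦ ?_) fun x hx ↦ ?_
    · exact (isCoprime_X_sub_C_of_isUnit_sub (sub_ne_zero.2 hxy).isUnit).pow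
    · rw [X_sub_C_pow_dvd_iff, X_pow_dvd_iff]
      intro l hl
      have := taylor_coeff x R l
      rw [taylor_apply] at this
      rw [this, h x hx l hl]
  have := natDegree_le_of_dvd hdvd hR
  rwa [natDegree_prod_of_monic _ _ fun s _ ↦ (monic_X_sub_C s).pow _, Finset.sum_congr rfl
    (fun s _ ↦ by rw [natDegree_pow, natDegree_X_sub_C, mul_one]), Finset.sum_const,
    smul_eq_mul] at this

theorem sum_C_mul_X_pow_mul_ne_zero {K ι : Type*} [Field K] [Fintype ι] (c : ι → K) (hc : c ≠ 0)
    (N : ι → ℕ) (hN : Function.Injective N) (G : ι → K[X]) (hG : ∀ z, (G z).coeff 0 ≠ 0) :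
    ∑ z, C (c z) * (X ^ N z * G z) ≠ 0 := by
  classical
  obtain ⟨z₀, hz₀⟩ := Function.ne_iff.1 hc
  obtain ⟨z, hz, hmin⟩ := Finset.exists_min_image (Finset.univ.filter fun z ↦ c z ≠ 0) N
    ⟨z₀, by simpa using hz₀⟩
  simp only [Finset.mem_filter, Finset.mem_univ, true_and] at hz hmin
  intro h
  have h1 := congrArg (fun p ↦ p.coeff (N z)) h
  simp only [finsetSum_coeff, coeff_C_mul, coeff_zero, coeff_X_pow_mul'] at h1
  rw [Finset.sum_eq_single z] at h1
  · simp only [le_refl, if_true, Nat.sub_self, mul_eq_zero] at h1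
    exact h1.elim hz (hG z)
  · intro w _ hw
    by_cases hcw : c w = 0
    · simp [hcw]
    · rw [if_neg, mul_zero]
      have := hmin w hcw
      have := hN.ne hw
      omega
  · simp

theorem stepanov_count_numeric {u m L n W : ℕ} (hu : u - 1 = m * L) (hu2 : 2 ≤ u)
    (hW : W = L * (u + 1) + (L + n + 1) + (u - 1) * n) :
    (u - 1) * W < m * ((L + n + 1) * (L * (u + 1))) := by
  obtain ⟨v, rfl⟩ : ∃ v, u = v + 2 := ⟨u - 2, by omega⟩
  have hv : v + 2 - 1 = v + 1 := by omega
  rw [hv] at hu hW ⊢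
  have hm : 0 < m := Nat.pos_of_ne_zero fun h ↦ by simp [h] at hu
  have hL : L ≤ v + 1 := hu ▸ Nat.le_mul_of_pos_left L hm
  have : m * ((L + n + 1) * (L * (v + 2 + 1))) = (v + 1) * ((L + n + 1) * (v + 3)) := by
    rw [hu]; ring
  rw [this, hW]
  refine Nat.mul_lt_mul_of_pos_left ?_ (by omega)
  nlinarith

theorem stepanov_bound_numeric {u m L n E N : ℕ} (hu : u - 1 = m * L) (hu2 : 2 ≤ u)
    (h : N * (u - 1) ≤ L * (u + 1) + u ^ 2 * (L + n + E)) :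
    m * N ≤ u ^ 2 + (2 + 2 * m * (n + E)) * u := by
  obtain ⟨v, rfl⟩ : ∃ v, u = v + 2 := ⟨u - 2, by omega⟩
  have hv : v + 2 - 1 = v + 1 := by omega
  rw [hv] at hu h
  refine Nat.le_of_mul_le_mul_right (c := v + 1) ?_ (by omega)
  have h1 : m * N * (v + 1) ≤ m * (L * (v + 2 + 1) + (v + 2) ^ 2 * (L + n + E)) := by
    rw [mul_assoc]; exact Nat.mul_le_mul_left m h
  refine h1.trans ?_
  have h2 : m * (L * (v + 2 + 1) + (v + 2) ^ 2 * (L + n + E)) =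
      (v + 1) * (v + 3) + (v + 2) ^ 2 * (v + 1) + (v + 2) ^ 2 * (m * (n + E)) := by
    rw [hu]; ring
  rw [h2]
  have h3 : (2 + 2 * m * (n + E)) = 2 + 2 * (m * (n + E)) := by ring
  rw [h3]
  generalize m * (n + E) = y
  nlinarith [Nat.zero_le (v * y), Nat.zero_le (v * v * y)]

theorem stepanov_card_le {K : Type*} [Field K] [Fintype K] (T : Finset K) (hT : 0 ∈ T)
    (e : K → ℕ) (he : e 0 = 1) {u m : ℕ} (hK : Fintype.card K = u ^ 2) (hu : 2 ≤ u)
    (hm : m ∣ u - 1) (a : K) (A : Finset K)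
    (hA : ∀ x ∈ A, x ∉ T ∧ (∏ s ∈ T, (x - s) ^ (e s * ((u ^ 2 - 1) / m))) = a) :
    m * A.card ≤ u ^ 2 + (2 + 2 * m * (T.card + ∑ s ∈ T, e s)) * u := by
  classical
  obtain ⟨L, hL⟩ := hm
  have hmpos : 0 < m := Nat.pos_of_ne_zero fun h ↦ by simp [h] at hL; omega
  set B := L * (u + 1) with hB
  have hmB : u ^ 2 - 1 = m * B := by
    rw [hB, ← mul_assoc, ← hL]
    have := Nat.sq_sub_sq u 1
    rw [one_pow] at this
    rw [this, mul_comm]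
  have hBdiv : (u ^ 2 - 1) / m = B := by rw [hmB, Nat.mul_div_cancel_left _ hmpos]
  rw [hBdiv] at hA
  set n := T.card
  set E := ∑ s ∈ T, e s
  set W := B + (L + n + 1) + (u - 1) * n with hW
  have hQ : m * B < u ^ 2 := by
    have : 0 < u ^ 2 := by positivity
    omega
  let ι := Fin m × Fin (L + n + 1) × Fin B
  let N : ι → ℕ := fun z ↦ z.2.2 + u ^ 2 * z.2.1
  let P : ι → K[X] := fun z ↦ ∏ s ∈ T, (X - C s) ^ ((if s = 0 then N z else 0) + z.1 * (e s * B))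
  have hPX (z : ι) : P z = X ^ N z * (∏ s ∈ T, (X - C s) ^ (e s * B)) ^ (z.1 : ℕ) := by
    rw [← Finset.prod_pow]
    simp only [P, pow_add, Finset.prod_mul_distrib, ← pow_mul, mul_comm (z.1 : ℕ)]
    congr 1
    rw [Finset.prod_eq_single_of_mem 0 hT fun s _ hs ↦ by simp [hs]]
    simp
  choose p hpdeg hp using fun (z : ι) (l : ℕ) ↦ exists_hasseDeriv_prod_X_sub_C_pow T
    (fun s ↦ (if s = 0 then N z else 0) + z.1 * (e s * B)) l
  let V : ι → ℕ → K[X] := fun z l ↦ C (a ^ (z.1 : ℕ)) * X ^ ((z.2.2 : ℕ) + z.2.1) * p z l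
  let Φ : (ι → K) →ₗ[K] (Fin (u - 1) × Fin W → K) :=
    { toFun := fun c w ↦ ∑ z, c z * (V z w.1).coeff w.2
      map_add' := fun c d ↦ by
        ext w; simp [add_mul, Finset.sum_add_distrib]
      map_smul' := fun r c ↦ by
        ext w; simp [Finset.mul_sum, mul_assoc] }
  have hker : LinearMap.ker Φ ≠ ⊥ := by
    apply LinearMap.ker_ne_bot_of_finrank_lt
    simp only [Module.finrank_fintype_fun_eq_card, Fintype.card_prod, Fintype.card_fin, ι]
    exact stepanov_count_numeric hL hu hW
  obtain ⟨c, hc, hc0⟩ := Submodule.exists_mem_ne_zero_of_ne_bot hker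
  have hcond : ∀ l < u - 1, ∑ z, C (c z) * V z l = 0 := by
    intro l hl
    ext w
    rw [finsetSum_coeff, coeff_zero]
    by_cases hw : w < W
    · have := congrFun (LinearMap.mem_ker.1 hc) (⟨l, hl⟩, ⟨w, hw⟩)
      simpa [Φ] using this
    · refine Finset.sum_eq_zero fun z _ ↦ ?_
      rw [coeff_C_mul, coeff_eq_zero_of_natDegree_lt, mul_zero]
      have h1 := z.2.1.isLt
      have h2 := z.2.2.isLt
      have h3 : (V z l).natDegree ≤ (z.2.2 + z.2.1) + l * n :=
        natDegree_mul_le.trans (add_le_add (natDegree_C_mul_X_pow_le _ _) (hpdeg z l))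
      have h4 : l * n ≤ (u - 1) * n := Nat.mul_le_mul_right n hl.le
      omega
  set R := ∑ z, C (c z) * P z with hR
  have hR0 : R ≠ 0 := by
    have hP' (z : ι) : P z = X ^ (N z + z.1 * B) *
        (∏ s ∈ T.erase 0, (X - C s) ^ (e s * B)) ^ (z.1 : ℕ) := by
      rw [hPX, ← Finset.mul_prod_erase T _ hT, he, mul_pow, ← mul_assoc, C_0, sub_zero, one_mul,
        ← pow_mul, ← pow_add, mul_comm B]
    simp only [hR, hP']
    refine sum_C_mul_X_pow_mul_ne_zero c hc0 (fun z ↦ N z + z.1 * B) ?_ _ fun z ↦ ?_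
    · rintro ⟨i, j, t⟩ ⟨i', j', t'⟩ h
      simp only [N] at h
      have ht := t.isLt
      have ht' := t'.isLt
      have hlt (i : Fin m) (t : Fin B) : (t : ℕ) + i * B < u ^ 2 := by
        have : ((i : ℕ) + 1) * B ≤ m * B := Nat.mul_le_mul_right B i.isLt
        have := t.isLt
        rw [add_mul] at *
        omega
      have h' : ((t : ℕ) + i * B) + u ^ 2 * j = ((t' : ℕ) + i' * B) + u ^ 2 * j' := by omega
      have e1 := congrArg (· % u ^ 2) h'
      have e2 := congrArg (· / u ^ 2) h'
      have hupos : 0 < u ^ 2 := by positivity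
      simp only [Nat.add_mul_mod_self_left, Nat.mod_eq_of_lt (hlt _ _),
        Nat.add_mul_div_left _ _ hupos, Nat.div_eq_of_lt (hlt _ _), zero_add] at e1 e2
      have hBpos : 0 < B := by omega
      have e3 := congrArg (· % B) e1
      have e4 := congrArg (· / B) e1
      simp only [Nat.add_mul_mod_self_right, Nat.mod_eq_of_lt ht, Nat.mod_eq_of_lt ht',
        Nat.add_mul_div_right _ _ hBpos, Nat.div_eq_of_lt ht, Nat.div_eq_of_lt ht',
        zero_add] at e3 e4
      ext <;> assumption
    · rw [coeff_zero_eq_eval_zero, eval_pow, eval_prod]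
      refine pow_ne_zero _ (Finset.prod_ne_zero_iff.2 fun s hs ↦ ?_)
      rw [eval_pow]
      refine pow_ne_zero _ ?_
      simpa using (Finset.mem_erase.1 hs).1
  have hvan : ∀ x ∈ A, ∀ l < u - 1, (hasseDeriv l R).eval x = 0 := by
    intro x hx l hl
    obtain ⟨hxT, hxa⟩ := hA x hx
    have hrad : (∏ s ∈ T, (X - C s) : K[X]).eval x ≠ 0 := by
      rw [eval_prod]
      refine Finset.prod_ne_zero_iff.2 fun s hs ↦ ?_
      rw [eval_sub, eval_X, eval_C, sub_ne_zero]
      rintro rfl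
      exact hxT hs
    have hxQ : x ^ u ^ 2 = x := hK ▸ FiniteField.pow_card x
    have h1 : (∏ s ∈ T, (X - C s)) ^ l * hasseDeriv l R = ∑ z, C (c z) * (P z * p z l) := by
      rw [hR, map_sum, Finset.mul_sum]
      refine Finset.sum_congr rfl fun z _ ↦ ?_
      rw [← hp z l, ← smul_eq_C_mul, map_smul, ← smul_eq_C_mul, mul_smul_comm]
    have h2 : ∀ z, (P z * p z l).eval x = (V z l).eval x := by
      intro z
      simp only [hPX, V, N, eval_mul, eval_pow, eval_X, eval_C, eval_prod, eval_sub, hxa,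
        pow_add]
      rw [pow_mul x (u ^ 2), hxQ]
      ring
    have h3 := congrArg (eval x) h1
    rw [eval_mul, eval_finsetSum] at h3
    simp only [eval_mul (p := C _), h2] at h3
    simp only [← eval_mul] at h3
    rw [← eval_finsetSum, hcond l hl, eval_zero, eval_mul, eval_pow] at h3
    exact (mul_eq_zero.1 h3).resolve_left (pow_ne_zero _ hrad)
  have hdeg : R.natDegree ≤ B + u ^ 2 * (L + n + E) := by
    refine natDegree_sum_le_of_forall_le _ _ fun z _ ↦ (natDegree_C_mul_le _ _).trans ?_
    have h1 := z.2.1.isLt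
    have h2 := z.2.2.isLt
    have h3 : (P z).natDegree ≤ N z + z.1 * (E * B) := by
      rw [hPX]
      refine natDegree_mul_le.trans (add_le_add (natDegree_X_pow _).le ?_)
      refine natDegree_pow_le.trans (Nat.mul_le_mul_left _ ?_)
      rw [natDegree_prod_of_monic _ _ fun s _ ↦ (monic_X_sub_C s).pow _]
      simp [E, Finset.sum_mul]
    have h4 : u ^ 2 * (z.2.1 : ℕ) ≤ u ^ 2 * (L + n) := Nat.mul_le_mul_left _ (by omega)
    have h5 : z.1 * (E * B) ≤ u ^ 2 * E := by
      calc z.1 * (E * B) ≤ m * (E * B) := Nat.mul_le_mul_right _ z.1.isLt.le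
        _ = m * B * E := by ring
        _ ≤ _ := Nat.mul_le_mul_right _ hQ.le
    simp only [N] at h3
    rw [mul_add]
    omega
  exact stepanov_bound_numeric hL hu
    ((card_mul_le_natDegree_of_hasseDeriv_eval_eq_zero R hR0 _ A hvan).trans hdeg)

theorem norm_sum_le_of_card_fiber_le {Y : Type*} (s : Finset Y) (φ : Y → ℂ) {m D : ℕ} (hm : 1 < m)
    (hφ : ∀ y ∈ s, φ y ^ m = 1)
    (hD : ∀ v : ℂ, v ^ m = 1 → m * (s.filter fun y ↦ φ y = v).card ≤ D) :
    ‖∑ y ∈ s, φ y‖ ≤ (D : ℝ) - s.card := by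
  classical
  have hm0 : 0 < m := by omega
  have : NeZero m := ⟨hm0.ne'⟩
  obtain ⟨ζ, hζ⟩ : ∃ ζ : ℂ, IsPrimitiveRoot ζ m := ⟨_, Complex.isPrimitiveRoot_exp m hm0.ne'⟩
  set V := nthRootsFinset m (1 : ℂ) with hV
  have hVmem (v : ℂ) : v ∈ V ↔ v ^ m = 1 := mem_nthRootsFinset hm0 1
  have hVcard : V.card = m := hζ.card_nthRootsFinset
  have hVsum : ∑ v ∈ V, v = 0 := by
    have hV' : V = (Finset.range m).image fun i ↦ ζ ^ i := by
      ext v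
      rw [hVmem, Finset.mem_image]
      constructor
      · intro hv
        obtain ⟨i, hi, h⟩ := hζ.eq_pow_of_pow_eq_one hv
        exact ⟨i, Finset.mem_range.2 hi, h⟩
      · rintro ⟨i, _, rfl⟩
        rw [← pow_mul, mul_comm i, pow_mul, hζ.pow_eq_one, one_pow]
    rw [hV', Finset.sum_image fun i hi j hj h ↦
      hζ.pow_inj (Finset.mem_range.1 hi) (Finset.mem_range.1 hj) h]
    exact hζ.geom_sum_eq_zero hm
  have hmaps : ∀ y ∈ s, φ y ∈ V := fun y hy ↦ (hVmem _).2 (hφ y hy)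
  set N : ℂ → ℕ := fun v ↦ (s.filter fun y ↦ φ y = v).card
  have hcard : s.card = ∑ v ∈ V, N v := Finset.card_eq_sum_card_fiberwise hmaps
  have hsum : ∑ y ∈ s, φ y = ∑ v ∈ V, (N v : ℂ) * v := by
    rw [← Finset.sum_fiberwise_of_maps_to hmaps]
    refine Finset.sum_congr rfl fun v _ ↦ ?_
    rw [Finset.sum_congr rfl fun y hy ↦ (Finset.mem_filter.1 hy).2, Finset.sum_const, nsmul_eq_mul]
  have hsum' : ∑ y ∈ s, φ y = ∑ v ∈ V, ((((N v : ℝ) - D / m : ℝ)) : ℂ) * v := by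
    rw [hsum]
    push_cast
    have h : ∑ v ∈ V, (D / m : ℂ) * v = 0 := by rw [← Finset.mul_sum, hVsum, mul_zero]
    simp only [sub_mul, Finset.sum_sub_distrib, h, sub_zero]
  rw [hsum']
  calc _ ≤ ∑ v ∈ V, ((D : ℝ) / m - N v) := by
        refine (norm_sum_le _ _).trans (Finset.sum_le_sum fun v hv ↦ ?_)
        rw [norm_mul, Complex.norm_eq_one_of_pow_eq_one ((hVmem v).1 hv) hm0.ne', mul_one,
          Complex.norm_real, Real.norm_eq_abs, abs_sub_comm, abs_of_nonneg]
        rw [sub_nonneg, le_div_iff₀ (by positivity), mul_comm]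
        exact_mod_cast hD v ((hVmem v).1 hv)
    _ = _ := by
        rw [Finset.sum_sub_distrib, Finset.sum_const, hVcard, hcard, nsmul_eq_mul,
          mul_div_cancel₀ _ (by positivity)]
        push_cast
        rfl

theorem MulChar.pow_eq_one_of_apply_eq_one {F : Type*} [Field F] [Fintype F] (χ : MulChar F ℂ)
    {b : F} (hb : χ b = 1) : b ^ ((Fintype.card F - 1) / orderOf χ) = 1 := by
  classical
  have hb0 : b ≠ 0 := by
    rintro rfl
    simp at hb
  obtain ⟨g, hg⟩ := IsCyclic.exists_generator (α := Fˣ)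
  obtain ⟨k, hk⟩ := Submonoid.mem_powers_iff _ _ |>.1
    (mem_powers_iff_mem_zpowers.2 (hg (Units.mk0 b hb0)))
  have hbk : b = (g : F) ^ k := by
    have := congrArg Units.val hk
    simpa using this.symm
  have h1 : χ ^ k = 1 := by
    rw [MulChar.eq_iff hg, MulChar.pow_apply_coe, MulChar.one_apply_coe, ← hb, hbk, map_pow]
  obtain ⟨j, rfl⟩ := orderOf_dvd_of_pow_eq_one h1
  rw [hbk, ← pow_mul, mul_right_comm, Nat.mul_div_cancel' χ.orderOf_dvd_card_sub_one,
    pow_mul, FiniteField.pow_card_sub_one_eq_one _ g.ne_zero, one_pow]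

theorem MulChar.pow_eq_one_of_apply_norm_eq_one {F K : Type*} [Field F] [Fintype F] [Field K]
    [Fintype K] [Algebra F K] (χ : MulChar F ℂ) {w : K} (hw : χ (Algebra.norm F w) = 1) :
    w ^ ((Fintype.card K - 1) / orderOf χ) = 1 := by
  have h := congrArg (algebraMap F K) (χ.pow_eq_one_of_apply_eq_one hw)
  rw [map_pow, FiniteField.algebraMap_norm_eq_pow, ← pow_mul, map_one, Nat.card_eq_fintype_card,
    Nat.card_eq_fintype_card] at h
  have h1 : Fintype.card F - 1 ∣ Fintype.card K - 1 := by
    rw [Module.card_eq_pow_finrank (K := F) (V := K)]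
    simpa using Nat.sub_dvd_pow_sub_pow (Fintype.card F) 1 (Module.finrank F K)
  rwa [← Nat.mul_div_assoc _ χ.orderOf_dvd_card_sub_one, Nat.div_mul_cancel h1] at h

theorem MulChar.norm_apply_le_one {F : Type*} [Field F] [Fintype F] (χ : MulChar F ℂ) (a : F) :
    ‖χ a‖ ≤ 1 := by
  by_cases ha : a = 0
  · simp [ha]
  · have h : χ a ^ orderOf χ = 1 := by
      rw [← MulChar.pow_apply' χ χ.orderOf_pos.ne', pow_orderOf_eq_one, MulChar.one_apply
        (Ne.isUnit ha)]
    exact (Complex.norm_eq_one_of_pow_eq_one h χ.orderOf_pos.ne').le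

theorem norm_sum_mulChar_norm_le {F K : Type*} [Field F] [Fintype F] [Field K]
    [Fintype K] [Algebra F K] (χ : MulChar F ℂ) (hχ : χ ≠ 1) (T : Finset F) {s₀ : F} (hs₀ : s₀ ∈ T)
    (e : F → ℕ) (he : e s₀ = 1) {r : ℕ} (hr : r ≠ 0) (hK : Module.finrank F K = 2 * r) :
    ‖∑ x : K, ∏ s ∈ T, χ (Algebra.norm F (algebraMap F K s - x)) ^ e s‖ ≤
      (2 + 2 * orderOf χ * (T.card + ∑ s ∈ T, e s) + 2 * T.card : ℕ) *
        (Fintype.card F : ℝ) ^ r := by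
  classical
  set q := Fintype.card F
  set m := orderOf χ with hm
  have hq : 2 ≤ q := Fintype.one_lt_card
  have hm1 : 1 < m := by
    have h0 := χ.orderOf_pos
    have h1 : m ≠ 1 := fun h ↦ hχ (orderOf_eq_one_iff.1 h)
    omega
  have hKcard : Fintype.card K = (q ^ r) ^ 2 := by
    rw [Module.card_eq_pow_finrank (K := F) (V := K), hK, ← pow_mul, mul_comm]
  have hu : 2 ≤ q ^ r := hq.trans (Nat.le_self_pow hr q)
  have hmu : m ∣ q ^ r - 1 := by
    refine χ.orderOf_dvd_card_sub_one.trans ?_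
    simpa using Nat.sub_dvd_pow_sub_pow q 1 r
  let ι : F → K := fun s ↦ algebraMap F K (s - s₀)
  have hι : Function.Injective ι := (algebraMap F K).injective.comp sub_left_injective
  set f : K → K := fun y ↦ ∏ s ∈ T, (ι s - y) ^ e s with hf
  have hterm (y : K) : ∏ s ∈ T, χ (Algebra.norm F (ι s - y)) ^ e s = χ (Algebra.norm F (f y)) := by
    simp [hf, map_prod, map_pow]
  have hshift : ∑ x : K, ∏ s ∈ T, χ (Algebra.norm F (algebraMap F K s - x)) ^ e s =
      ∑ y : K, χ (Algebra.norm F (f y)) := by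
    rw [← Equiv.sum_comp (Equiv.addRight (algebraMap F K s₀))]
    refine Finset.sum_congr rfl fun y _ ↦ ?_
    rw [← hterm]
    refine Finset.prod_congr rfl fun s _ ↦ ?_
    simp only [ι, Equiv.coe_addRight, map_sub]
    rw [show algebraMap F K s - (y + algebraMap F K s₀) =
      algebraMap F K s - algebraMap F K s₀ - y by ring]
  set T' := T.image ι with hT'
  have hT'card : T'.card = T.card := Finset.card_image_of_injective _ hι
  have hT0 : (0 : K) ∈ T' := Finset.mem_image.2 ⟨s₀, hs₀, by simp [ι]⟩
  set e' : K → ℕ := fun t ↦ e (Function.invFun ι t) with he'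
  have he'ι (s : F) : e' (ι s) = e s := by
    simp [he', Function.leftInverse_invFun hι s]
  have he'0 : e' 0 = 1 := by
    rw [← he, ← he'ι s₀]
    simp [ι]
  have hE : ∑ t ∈ T', e' t = ∑ s ∈ T, e s := by
    rw [hT', Finset.sum_image hι.injOn]
    simp [he'ι]
  have hfne : ∀ y ∈ T'ᶜ, f y ≠ 0 := by
    intro y hy
    refine Finset.prod_ne_zero_iff.2 fun s hs ↦ pow_ne_zero _ (sub_ne_zero.2 ?_)
    rintro rfl
    exact (Finset.mem_compl.1 hy) (Finset.mem_image_of_mem _ hs)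
  set D := (q ^ r) ^ 2 + (2 + 2 * m * (T.card + ∑ s ∈ T, e s)) * q ^ r with hD
  have hmain : ‖∑ y ∈ T'ᶜ, χ (Algebra.norm F (f y))‖ ≤ (D : ℝ) - (T'ᶜ).card := by
    refine norm_sum_le_of_card_fiber_le _ _ hm1 (fun y hy ↦ ?_) fun v hv ↦ ?_
    · rw [← MulChar.pow_apply' χ (by omega), hm, pow_orderOf_eq_one, MulChar.one_apply]
      exact (Algebra.norm_ne_zero_iff.2 (hfne y hy)).isUnit
    · set A := T'ᶜ.filter fun y ↦ χ (Algebra.norm F (f y)) = v with hA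
      rcases A.eq_empty_or_nonempty with h | ⟨y₁, hy₁⟩
      · simp [h]
      have h1 := stepanov_card_le T' hT0 e' he'0 hKcard hu hmu
        (∏ s ∈ T', (y₁ - s) ^ (e' s * (((q ^ r) ^ 2 - 1) / m))) A fun y hy ↦ ?_
      · rwa [hT'card, hE] at h1
      rw [hA, Finset.mem_filter] at hy hy₁
      refine ⟨Finset.mem_compl.1 hy.1, ?_⟩
      have hv0 : v ≠ 0 := by
        rintro rfl
        simp [show m ≠ 0 by omega] at hv
      have h2 : χ (Algebra.norm F (f y / f y₁)) = 1 := by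
        have h3 : χ (Algebra.norm F (f y / f y₁)) * χ (Algebra.norm F (f y₁)) =
            χ (Algebra.norm F (f y)) := by
          rw [← map_mul, ← map_mul, div_mul_cancel₀ _ (hfne y₁ hy₁.1)]
        rw [hy.2, hy₁.2] at h3
        exact mul_right_cancel₀ hv0 (h3.trans (one_mul v).symm)
      have h4 := χ.pow_eq_one_of_apply_norm_eq_one h2
      rw [hKcard, ← hm, div_pow, div_eq_one_iff_eq (pow_ne_zero _ (hfne y₁ hy₁.1))] at h4
      have h5 (y : K) : ∏ s ∈ T', (y - s) ^ (e' s * (((q ^ r) ^ 2 - 1) / m)) =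
          (∏ s ∈ T, (-1) ^ e s) ^ (((q ^ r) ^ 2 - 1) / m) * f y ^ (((q ^ r) ^ 2 - 1) / m) := by
        rw [hT', Finset.prod_image hι.injOn, ← mul_pow, hf, ← Finset.prod_mul_distrib,
          ← Finset.prod_pow]
        refine Finset.prod_congr rfl fun s _ ↦ ?_
        rw [he'ι, pow_mul, ← mul_pow]
        ring
      rw [h5, h5, h4]
  have hrest : ‖∑ y ∈ T', χ (Algebra.norm F (f y))‖ ≤ T.card := by
    refine (norm_sum_le _ _).trans ?_
    calc _ ≤ ∑ y ∈ T', (1 : ℝ) := Finset.sum_le_sum fun y _ ↦ χ.norm_apply_le_one _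
      _ = _ := by simp [hT'card]
  rw [hshift, ← Finset.sum_add_sum_compl T']
  refine (norm_add_le _ _).trans ((add_le_add hrest hmain).trans ?_)
  have hc : ((T'ᶜ).card : ℝ) = (q ^ r : ℝ) ^ 2 - T.card := by
    rw [Finset.card_compl, hKcard, hT'card, Nat.cast_sub]
    · push_cast; rfl
    · rw [← hKcard, ← hT'card]
      exact Finset.card_le_univ _
  have hone : (1 : ℝ) ≤ (q : ℝ) ^ r := one_le_pow₀ (by exact_mod_cast (by omega : 1 ≤ q))
  rw [hc, hD]
  push_cast
  nlinarith [mul_le_mul_of_nonneg_left hone (Nat.cast_nonneg T.card (α := ℝ))]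

theorem Algebra.norm_algebraMap_sub_powerBasis_gen {R S : Type*} [CommRing R] [CommRing S]
    [IsDomain R] [IsDomain S] [Algebra R S] (pb : PowerBasis R S) (s : R) :
    Algebra.norm R (algebraMap R S s - pb.gen) = (minpoly R pb.gen).eval s := by
  classical
  rw [Algebra.norm_eq_matrix_det pb.basis, ← charpoly_leftMulMatrix pb, Matrix.eval_charpoly,
    map_sub, AlgHom.commutes]
  rfl

theorem Algebra.norm_algebraMap_sub {F K : Type*} [Field F] [Field K] [Algebra F K]
    [FiniteDimensional F K] (s : F) (x : K) :
    Algebra.norm F (algebraMap F K s - x) =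
      (minpoly F x).eval s ^ (Module.finrank F K / (minpoly F x).natDegree) := by
  have hx : IsIntegral F x := .of_finite F x
  have h1 : algebraMap F K s - x = algebraMap (IntermediateField.adjoin F {x}) K
      (algebraMap F _ s - (IntermediateField.adjoin.powerBasis hx).gen) := by
    simp
  rw [h1, ← Algebra.norm_norm (S := IntermediateField.adjoin F {x}), Algebra.norm_algebraMap,
    map_pow, Algebra.norm_algebraMap_sub_powerBasis_gen,
    ← IntermediateField.adjoin.finrank hx,
    ← Module.finrank_mul_finrank F (IntermediateField.adjoin F {x}) K,
    Nat.mul_div_cancel_left _ Module.finrank_pos]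
  congr 2
  rw [IntermediateField.adjoin.powerBasis_gen]
  exact IntermediateField.minpoly_gen F x

theorem finite_setOf_monic_natDegree_eq (F : Type*) [Field F] [Finite F] (d : ℕ) :
    {g : F[X] | g.Monic ∧ g.natDegree = d}.Finite := by
  refine Set.Finite.of_injOn (f := fun g (i : Fin d) ↦ g.coeff i) (t := Set.univ)
    (Set.mapsTo_univ _ _) (fun g hg h hh hgh ↦ ?_) Set.finite_univ
  ext i
  rcases lt_trichotomy i d with hi | rfl | hi
  · exact congrFun hgh ⟨i, hi⟩
  · have h1 := hg.1.coeff_natDegree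
    have h2 := hh.1.coeff_natDegree
    rw [hg.2] at h1
    rw [hh.2] at h2
    rw [h1, h2]
  · rw [coeff_eq_zero_of_natDegree_lt (hg.2.trans_lt hi),
      coeff_eq_zero_of_natDegree_lt (hh.2.trans_lt hi)]

/-- The monic polynomials of degree `d` over a finite field. -/
noncomputable def monicPolys (F : Type*) [Field F] [Finite F] (d : ℕ) : Finset F[X] :=
  (finite_setOf_monic_natDegree_eq F d).toFinset

theorem mem_monicPolys {F : Type*} [Field F] [Finite F] {d : ℕ} {g : F[X]} :
    g ∈ monicPolys F d ↔ g.Monic ∧ g.natDegree = d := by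
  simp [monicPolys]

theorem monicPolys_zero (F : Type*) [Field F] [Finite F] : monicPolys F 0 = {1} := by
  ext g
  rw [mem_monicPolys, Finset.mem_singleton]
  exact ⟨fun h ↦ h.1.natDegree_eq_zero.1 h.2, by rintro rfl; simp⟩

open UniqueFactorizationMonoid in
theorem sum_natDegree_mul_card_pow_dvd {F : Type*} [Field F] [Finite F] {d : ℕ} {g : F[X]}
    (hg : g ∈ monicPolys F d) (I : Finset F[X])
    (hI : ∀ P, P ∈ I ↔ P.Monic ∧ Irreducible P ∧ P.natDegree ≤ d) :
    open Classical in
    ∑ P ∈ I, P.natDegree * ((Finset.Icc 1 d).filter fun k ↦ P ^ k ∣ g).card = d := by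
  classical
  rw [mem_monicPolys] at hg
  have hg0 := hg.1.ne_zero
  have hmon : ∀ P ∈ normalizedFactors g, P.Monic := fun P hP ↦
    ((Polynomial.mem_normalizedFactors_iff hg0).1 hP).2.1
  have hprod : (normalizedFactors g).prod = g := by
    rw [prod_normalizedFactors_eq hg0, hg.1.normalize_eq_self]
  have hsub : (normalizedFactors g).toFinset ⊆ I := fun P hP ↦ by
    obtain ⟨h1, h2, h3⟩ := (Polynomial.mem_normalizedFactors_iff hg0).1 (Multiset.mem_toFinset.1 hP)
    exact (hI P).2 ⟨h2, h1, hg.2 ▸ natDegree_le_of_dvd h3 hg0⟩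
  have hcount : ∀ P ∈ I, ((Finset.Icc 1 d).filter fun k ↦ P ^ k ∣ g).card =
      (normalizedFactors g).count P := by
    intro P hP
    obtain ⟨h1, h2, h3⟩ := (hI P).1 hP
    have key (k : ℕ) : P ^ k ∣ g ↔ k ≤ (normalizedFactors g).count P := by
      rw [pow_dvd_iff_le_emultiplicity, emultiplicity_eq_count_normalizedFactors h2 hg0,
        h1.normalize_eq_self]
      exact Nat.cast_le
    have hle : (normalizedFactors g).count P ≤ d := by
      have h4 := natDegree_le_of_dvd ((key _).2 le_rfl) hg0
      rw [natDegree_pow, hg.2] at h4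
      exact (Nat.le_mul_of_pos_right _ h2.natDegree_pos).trans h4
    have : ((Finset.Icc 1 d).filter fun k ↦ P ^ k ∣ g) =
        Finset.Icc 1 ((normalizedFactors g).count P) := by
      ext k
      simp only [Finset.mem_filter, Finset.mem_Icc, key]
      omega
    rw [this, Nat.card_Icc, Nat.add_sub_cancel]
  calc _ = ∑ P ∈ I, (normalizedFactors g).count P * P.natDegree :=
        Finset.sum_congr rfl fun P hP ↦ by rw [hcount P hP, mul_comm]
    _ = ∑ P ∈ (normalizedFactors g).toFinset, (normalizedFactors g).count P * P.natDegree := by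
        refine (Finset.sum_subset hsub fun P _ hP ↦ ?_).symm
        rw [Multiset.count_eq_zero_of_notMem (mt Multiset.mem_toFinset.2 hP), zero_mul]
    _ = ((normalizedFactors g).map natDegree).sum := by
        rw [Finset.sum_multiset_map_count]
        simp
    _ = d := by
        rw [← natDegree_multiset_prod_of_monic _ hmon, hprod, hg.2]

open Classical in
theorem sum_pow_mul_sum_monicPolys {F : Type*} [Field F] [Finite F] (L : F[X] →* ℂ) {P : F[X]}
    (hP : P.Monic) (k d : ℕ) :
    ∑ g ∈ (monicPolys F d).filter fun g ↦ P ^ k ∣ g, L g =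
      if k * P.natDegree ≤ d then L P ^ k * ∑ h ∈ monicPolys F (d - k * P.natDegree), L h else 0 := by
  have hPk : (P ^ k).Monic := hP.pow k
  split_ifs with h
  · rw [Finset.mul_sum]
    symm
    refine Finset.sum_bij (fun h _ ↦ P ^ k * h) ?_ ?_ ?_ ?_
    · intro g hg
      rw [mem_monicPolys] at hg
      rw [Finset.mem_filter, mem_monicPolys]
      refine ⟨⟨hPk.mul hg.1, ?_⟩, dvd_mul_right _ _⟩
      rw [hPk.natDegree_mul hg.1, hP.natDegree_pow, hg.2]
      omega
    · intro g _ g' _ h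
      exact mul_left_cancel₀ hPk.ne_zero h
    · intro g hg
      rw [Finset.mem_filter, mem_monicPolys] at hg
      obtain ⟨⟨h1, h2⟩, g', rfl⟩ := hg
      have hg' : g'.Monic := hPk.of_mul_monic_left h1
      rw [hPk.natDegree_mul hg', hP.natDegree_pow] at h2
      exact ⟨g', mem_monicPolys.2 ⟨hg', by omega⟩, rfl⟩
    · intro g _
      rw [map_mul, map_pow]
  · rw [Finset.filter_false_of_mem, Finset.sum_empty]
    intro g hg hdvd
    rw [mem_monicPolys] at hg
    have := natDegree_le_of_dvd hdvd hg.1.ne_zero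
    rw [hP.natDegree_pow, hg.2] at this
    exact h this

theorem natDegree_mul_sum_monicPolys {F : Type*} [Field F] [Finite F] (L : F[X] →* ℂ) {d : ℕ}
    (I : Finset F[X]) (hI : ∀ P, P ∈ I ↔ P.Monic ∧ Irreducible P ∧ P.natDegree ≤ d) :
    d * ∑ g ∈ monicPolys F d, L g = ∑ r ∈ Finset.Icc 1 d,
      (∑ P ∈ I with P.natDegree ∣ r, P.natDegree * L P ^ (r / P.natDegree)) *
        ∑ h ∈ monicPolys F (d - r), L h := by
  classical
  have hdeg (P) (hP : P ∈ I) : 0 < P.natDegree := ((hI P).1 hP).2.1.natDegree_pos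
  calc (d : ℂ) * ∑ g ∈ monicPolys F d, L g
      = ∑ g ∈ monicPolys F d, ∑ P ∈ I, ∑ k ∈ Finset.Icc 1 d,
        if P ^ k ∣ g then (P.natDegree : ℂ) * L g else 0 := by
        rw [Finset.mul_sum]
        refine Finset.sum_congr rfl fun g hg ↦ ?_
        have h := congrArg (Nat.cast (R := ℂ)) (sum_natDegree_mul_card_pow_dvd hg I hI)
        rw [← h]
        push_cast
        rw [Finset.sum_mul]
        refine Finset.sum_congr rfl fun P _ ↦ ?_
        rw [← Finset.sum_filter, Finset.sum_const, nsmul_eq_mul]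
        ring
    _ = ∑ P ∈ I, ∑ k ∈ Finset.Icc 1 d, (P.natDegree : ℂ) *
          ∑ g ∈ (monicPolys F d).filter fun g ↦ P ^ k ∣ g, L g := by
        rw [Finset.sum_comm]
        refine Finset.sum_congr rfl fun P _ ↦ ?_
        rw [Finset.sum_comm]
        refine Finset.sum_congr rfl fun k _ ↦ ?_
        rw [Finset.mul_sum, Finset.sum_filter]
    _ = ∑ P ∈ I, ∑ r ∈ Finset.Icc 1 d, if P.natDegree ∣ r then
          P.natDegree * L P ^ (r / P.natDegree) * ∑ h ∈ monicPolys F (d - r), L h else 0 := by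
        refine Finset.sum_congr rfl fun P hP ↦ ?_
        have hP0 := hdeg P hP
        rw [← Finset.sum_filter]
        simp_rw [sum_pow_mul_sum_monicPolys L ((hI P).1 hP).1, mul_ite, mul_zero]
        rw [← Finset.sum_filter]
        refine Finset.sum_bij (fun k _ ↦ k * P.natDegree) ?_ ?_ ?_ ?_
        · intro k hk
          simp only [Finset.mem_filter, Finset.mem_Icc] at hk ⊢
          exact ⟨⟨Nat.mul_pos hk.1.1 hP0, hk.2⟩, dvd_mul_left _ _⟩
        · intro a _ b _ h
          exact Nat.eq_of_mul_eq_mul_right hP0 h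
        · intro r hr
          simp only [Finset.mem_filter, Finset.mem_Icc] at hr
          obtain ⟨⟨h1, h2⟩, k, rfl⟩ := hr
          refine ⟨k, ?_, mul_comm _ _⟩
          simp only [Finset.mem_filter, Finset.mem_Icc]
          have : k ≤ P.natDegree * k := Nat.le_mul_of_pos_left _ hP0
          refine ⟨⟨Nat.pos_of_mul_pos_left h1, this.trans h2⟩, by rwa [mul_comm]⟩
        · intro k _
          rw [Nat.mul_div_cancel _ hP0, mul_assoc]
    _ = _ := by
        rw [Finset.sum_comm]
        refine Finset.sum_congr rfl fun r _ ↦ ?_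
        rw [Finset.sum_filter, Finset.sum_mul]
        refine Finset.sum_congr rfl fun P _ ↦ ?_
        rw [ite_mul, zero_mul]

theorem FiniteField.card_filter_minpoly_eq {F K : Type*} [Field F] [Finite F] [Field K] [Fintype K]
    [Algebra F K] {P : F[X]} (hP : P.Monic) (hP' : Irreducible P)
    (hdvd : P.natDegree ∣ Module.finrank F K) :
    open Classical in (Finset.univ.filter fun x : K ↦ minpoly F x = P).card = P.natDegree := by
  classical
  have : Fact (Irreducible P) := ⟨hP'⟩
  have : Module.Finite F (AdjoinRoot P) := (AdjoinRoot.powerBasis hP'.ne_zero).finite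
  have : Finite (AdjoinRoot P) := Module.finite_of_finite F
  have h1 : Module.finrank F (AdjoinRoot P) = P.natDegree := by
    rw [(AdjoinRoot.powerBasis hP'.ne_zero).finrank, AdjoinRoot.powerBasis_dim]
  obtain ⟨φ⟩ := FiniteField.nonempty_algHom_of_finrank_dvd (F := F) (K := AdjoinRoot P) (L := K)
    (by rwa [h1])
  have h2 : aeval (φ (AdjoinRoot.root P)) P = 0 := by
    rw [aeval_algHom_apply, AdjoinRoot.aeval_eq, AdjoinRoot.mk_self, map_zero]
  have hsplit : (P.map (algebraMap F K)).Splits := by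
    rw [minpoly.eq_of_irreducible_of_monic hP' h2 hP]
    exact Normal.splits inferInstance _
  rw [← card_rootSet_eq_natDegree (PerfectField.separable_of_irreducible hP') hsplit,
    ← Set.toFinset_card]
  congr 1
  ext x
  rw [Finset.mem_filter, Set.mem_toFinset, mem_rootSet]
  constructor
  · rintro ⟨_, rfl⟩
    exact ⟨hP'.ne_zero, minpoly.aeval F x⟩
  · rintro ⟨_, h⟩
    exact ⟨Finset.mem_univ _, (minpoly.eq_of_irreducible_of_monic hP' h hP).symm⟩

theorem FiniteField.sum_minpoly_pow {F K : Type*} [Field F] [Finite F] [Field K] [Fintype K]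
    [Algebra F K] (L : F[X] →* ℂ) {d : ℕ} (hd : Module.finrank F K ≤ d)
    (I : Finset F[X]) (hI : ∀ P, P ∈ I ↔ P.Monic ∧ Irreducible P ∧ P.natDegree ≤ d) :
    ∑ x : K, L (minpoly F x) ^ (Module.finrank F K / (minpoly F x).natDegree) =
      ∑ P ∈ I with P.natDegree ∣ Module.finrank F K,
        P.natDegree * L P ^ (Module.finrank F K / P.natDegree) := by
  classical
  have hmaps : ∀ x ∈ (Finset.univ : Finset K),
      minpoly F x ∈ I.filter fun P ↦ P.natDegree ∣ Module.finrank F K := by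
    intro x _
    have hx : IsIntegral F x := .of_finite F x
    rw [Finset.mem_filter, hI]
    exact ⟨⟨minpoly.monic hx, minpoly.irreducible hx, (minpoly.natDegree_le x).trans hd⟩,
      minpoly.degree_dvd hx⟩
  rw [← Finset.sum_fiberwise_of_maps_to hmaps]
  refine Finset.sum_congr rfl fun P hP ↦ ?_
  rw [Finset.mem_filter, hI] at hP
  rw [← FiniteField.card_filter_minpoly_eq (K := K) hP.1.1 hP.1.2.1 hP.2, ← nsmul_eq_mul,
    ← Finset.sum_const]
  refine Finset.sum_congr ?_ fun x hx ↦ ?_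
  · ext; simp
  · rw [(Finset.mem_filter.1 hx).2, FiniteField.card_filter_minpoly_eq (K := K) hP.1.1 hP.1.2.1 hP.2]

/-- The completely multiplicative function `g ↦ ∏ s ∈ T, χ (g s) ^ e s` on polynomials. -/
noncomputable def MulChar.evalProd {F : Type*} [Field F] (χ : MulChar F ℂ) (T : Finset F)
    (e : F → ℕ) : F[X] →* ℂ where
  toFun g := ∏ s ∈ T, χ (g.eval s) ^ e s
  map_one' := by simp
  map_mul' g h := by simp [mul_pow, Finset.prod_mul_distrib]

theorem MulChar.evalProd_apply {F : Type*} [Field F] (χ : MulChar F ℂ) (T : Finset F)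
    (e : F → ℕ) (g : F[X]) : χ.evalProd T e g = ∏ s ∈ T, χ (g.eval s) ^ e s := rfl

theorem add_mem_monicPolys {F : Type*} [Field F] [Finite F] {d : ℕ} {g M : F[X]}
    (hg : g ∈ monicPolys F d) (hM : M.degree < d) : g + M ∈ monicPolys F d := by
  rw [mem_monicPolys] at hg ⊢
  have hlt : M.degree < g.degree := by rwa [degree_eq_natDegree hg.1.ne_zero, hg.2]
  exact ⟨hg.1.add_of_left hlt, by rw [natDegree_add_eq_left_of_degree_lt hlt, hg.2]⟩

theorem MulChar.sum_monicPolys_evalProd_eq_zero {F : Type*} [Field F] [Fintype F]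
    {χ : MulChar F ℂ} (hχ : χ ≠ 1) {T : Finset F} {s₀ : F} (hs₀ : s₀ ∈ T) {e : F → ℕ}
    (he : e s₀ = 1) {d : ℕ} (hd : T.card ≤ d) :
    ∑ g ∈ monicPolys F d, χ.evalProd T e g = 0 := by
  classical
  set M : F[X] := ∏ s ∈ T.erase s₀, (X - C s) with hM
  have hMs (s : F) : M.eval s = ∏ t ∈ T.erase s₀, (s - t) := by simp [hM, eval_prod]
  have hM0 : M.eval s₀ ≠ 0 := by
    rw [hMs, Finset.prod_ne_zero_iff]
    exact fun t ht ↦ sub_ne_zero.2 (Finset.ne_of_mem_erase ht).symm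
  have hMdeg (c : F) : (C c * M).degree < d := by
    have h1 : M.natDegree = T.card - 1 := by
      rw [hM, natDegree_prod_of_monic _ _ fun s _ ↦ monic_X_sub_C s]
      simp [Finset.card_erase_of_mem hs₀]
    refine degree_le_natDegree.trans_lt ?_
    have h2 := natDegree_C_mul_le c M
    have := Finset.card_pos.2 ⟨s₀, hs₀⟩
    exact_mod_cast (by omega : (C c * M).natDegree < d)
  have hshift (c : F) : ∑ g ∈ monicPolys F d, χ.evalProd T e (g + C c * M) =
      ∑ g ∈ monicPolys F d, χ.evalProd T e g := by
    refine Finset.sum_bij (fun g _ ↦ g + C c * M) (fun g hg ↦ add_mem_monicPolys hg (hMdeg c))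
      (fun _ _ _ _ h ↦ add_right_cancel h) (fun g hg ↦ ⟨g + C (-c) * M,
        add_mem_monicPolys hg (hMdeg _), ?_⟩) fun _ _ ↦ rfl
    rw [C_neg]
    ring
  have hterm (g : F[X]) (c : F) : χ.evalProd T e (g + C c * M) =
      χ (g.eval s₀ + c * M.eval s₀) * ∏ s ∈ T.erase s₀, χ (g.eval s) ^ e s := by
    rw [MulChar.evalProd_apply, ← Finset.mul_prod_erase T _ hs₀, he, pow_one]
    congr 1
    · simp
    · refine Finset.prod_congr rfl fun s hs ↦ ?_
      have : M.eval s = 0 := by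
        rw [hMs]
        exact Finset.prod_eq_zero hs (sub_self s)
      simp [this]
  have hzero (g : F[X]) : ∑ c : F, χ.evalProd T e (g + C c * M) = 0 := by
    simp_rw [hterm, ← Finset.sum_mul]
    have : ∑ c : F, χ (g.eval s₀ + c * M.eval s₀) = ∑ c : F, χ c :=
      Equiv.sum_comp ((Equiv.mulRight₀ _ hM0).trans (Equiv.addLeft (g.eval s₀))) χ
    rw [this, MulChar.sum_eq_zero_of_ne_one hχ, zero_mul]
  have h : (Fintype.card F : ℂ) * ∑ g ∈ monicPolys F d, χ.evalProd T e g = 0 := by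
    calc _ = ∑ c : F, ∑ g ∈ monicPolys F d, χ.evalProd T e (g + C c * M) := by
          simp_rw [hshift, Finset.sum_const, nsmul_eq_mul, Finset.card_univ]
      _ = 0 := by
          rw [Finset.sum_comm]
          exact Finset.sum_eq_zero fun g _ ↦ hzero g
  exact (mul_eq_zero.1 h).resolve_left (Nat.cast_ne_zero.2 Fintype.card_ne_zero)

theorem MulChar.exists_newton_identities {F : Type*} [Field F] [Fintype F] (χ : MulChar F ℂ)
    (T : Finset F) (e : F → ℕ) :
    ∃ S : ℕ → ℂ, (∀ r ≠ 0, ∃ (K : Type) (_ : Field K) (_ : Fintype K) (_ : Algebra F K),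
      Module.finrank F K = r ∧
        S r = ∑ x : K, ∏ s ∈ T, χ (Algebra.norm F (algebraMap F K s - x)) ^ e s) ∧
    ∀ d : ℕ, d * ∑ g ∈ monicPolys F d, χ.evalProd T e g =
      ∑ r ∈ Finset.Icc 1 d, S r * ∑ g ∈ monicPolys F (d - r), χ.evalProd T e g := by
  classical
  obtain ⟨p, _⟩ := CharP.exists F
  have : Fact p.Prime := ⟨CharP.char_is_prime F p⟩
  have hex (r : ℕ) : ∃ (K : Type) (_ : Field K) (_ : Fintype K) (_ : Algebra F K),
      r ≠ 0 → Module.finrank F K = r := by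
    rcases eq_or_ne r 0 with rfl | hr
    · have := Fintype.ofFinite (FiniteField.Extension F p 1)
      exact ⟨FiniteField.Extension F p 1, inferInstance, this, inferInstance, fun h ↦ (h rfl).elim⟩
    · have : NeZero r := ⟨hr⟩
      have := Fintype.ofFinite (FiniteField.Extension F p r)
      exact ⟨FiniteField.Extension F p r, inferInstance, this, inferInstance,
        fun _ ↦ FiniteField.finrank_extension F p r⟩
  choose K h1 h2 h3 hK using hex
  refine ⟨fun r ↦ ∑ x : K r, ∏ s ∈ T, χ (Algebra.norm F (algebraMap F (K r) s - x)) ^ e s,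
    fun r hr ↦ ⟨K r, h1 r, h2 r, h3 r, hK r hr, rfl⟩, fun d ↦ ?_⟩
  have hfin : {P : F[X] | P.Monic ∧ Irreducible P ∧ P.natDegree ≤ d}.Finite := by
    refine ((Finset.range (d + 1)).biUnion (monicPolys F)).finite_toSet.subset fun P hP ↦ ?_
    simp only [Finset.coe_biUnion, Set.mem_iUnion]
    refine ⟨P.natDegree, ?_, mem_monicPolys.2 ⟨hP.1, rfl⟩⟩
    simpa using Nat.lt_succ_of_le hP.2.2
  have hI : ∀ P, P ∈ hfin.toFinset ↔ P.Monic ∧ Irreducible P ∧ P.natDegree ≤ d := fun P ↦ by simp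
  rw [natDegree_mul_sum_monicPolys _ _ hI]
  refine Finset.sum_congr rfl fun r hr ↦ ?_
  rw [Finset.mem_Icc] at hr
  have hKr := hK r (by omega)
  have h := FiniteField.sum_minpoly_pow (K := K r) (χ.evalProd T e) (hKr.le.trans hr.2) _ hI
  rw [hKr] at h
  rw [← h]
  congr 1
  refine Finset.sum_congr rfl fun x _ ↦ ?_
  rw [MulChar.evalProd_apply, ← Finset.prod_pow]
  refine Finset.prod_congr rfl fun s _ ↦ ?_
  have : FiniteDimensional F (K r) := .of_finite
  rw [Algebra.norm_algebraMap_sub, hKr, map_pow, ← pow_mul, ← pow_mul, mul_comm]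

theorem MulChar.sum_monicPolys_one {F : Type*} [Field F] [Fintype F] (χ : MulChar F ℂ)
    (T : Finset F) (e : F → ℕ) :
    ∑ g ∈ monicPolys F 1, χ.evalProd T e g = ∑ x : F, ∏ s ∈ T, χ (s - x) ^ e s := by
  symm
  refine Finset.sum_bij (fun x _ ↦ X - C x) (fun x _ ↦ mem_monicPolys.2 ⟨monic_X_sub_C x,
    natDegree_X_sub_C x⟩) (fun x _ y _ h ↦ C_injective (sub_right_injective h))
    (fun g hg ↦ ⟨-g.coeff 0, Finset.mem_univ _, ?_⟩) fun x _ ↦ by simp [MulChar.evalProd_apply]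
  rw [mem_monicPolys] at hg
  conv_rhs => rw [hg.1.eq_X_add_C hg.2]
  simp

theorem norm_le_one_of_norm_sum_pow_le {ι : Type*} [Fintype ι] (z : ι → ℂ) (C : ℝ)
    (h : ∀ r : ℕ, r ≠ 0 → ‖∑ i, z i ^ r‖ ≤ C) (j : ι) : ‖z j‖ ≤ 1 := by
  by_contra! hj
  have hu (i : ι) : ∃ u : Circle, z i = ‖z i‖ * (u : ℂ) := by
    refine ⟨Circle.exp (z i).arg, ?_⟩
    rw [Circle.coe_exp, Complex.norm_mul_exp_arg_mul_I]
  choose u hu using hu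
  have hU : {v : ι → Circle | ∀ i, 1 / 2 < ((v i : Circle) : ℂ).re} ∈ nhds (1 : ι → Circle) := by
    refine IsOpen.mem_nhds ?_ fun i ↦ by norm_num
    rw [Set.ofPred_forall]
    refine isOpen_iInter_of_finite fun i ↦ ?_
    exact isOpen_lt continuous_const (by fun_prop)
  have hfreq := (mapClusterPt_one_atTop_pow u).frequently hU
  have htend := (tendsto_pow_atTop_atTop_of_one_lt hj).eventually_gt_atTop (2 * C)
  obtain ⟨r, hr, hr', hr0⟩ := (hfreq.and_eventually
    (htend.and (Filter.eventually_ne_atTop 0))).exists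
  have hre (i : ι) : ‖z i‖ ^ r * (1 / 2) ≤ (z i ^ r).re := by
    have h1 : z i ^ r = ((‖z i‖ ^ r : ℝ) : ℂ) * ((u ^ r) i : Circle) := by
      conv_lhs => rw [hu i]
      push_cast
      rw [mul_pow]
      simp
    rw [h1, Complex.re_ofReal_mul]
    exact mul_le_mul_of_nonneg_left (hr i).le (by positivity)
  have h2 : ‖z j‖ ^ r * (1 / 2) ≤ ∑ i, ‖z i‖ ^ r * (1 / 2) :=
    Finset.single_le_sum (f := fun i ↦ ‖z i‖ ^ r * (1 / 2)) (fun i _ ↦ by positivity)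
      (Finset.mem_univ j)
  have h3 : ∑ i, ‖z i‖ ^ r * (1 / 2) ≤ ‖∑ i, z i ^ r‖ := by
    refine (Finset.sum_le_sum fun i _ ↦ hre i).trans ?_
    rw [← Complex.re_sum]
    exact Complex.re_le_norm _
  linarith [h r hr0]

theorem exists_power_sums_of_newton_identities {N : ℕ} (c S : ℕ → ℂ) (hc0 : c 0 = 1)
    (hc : ∀ d, N < d → c d = 0)
    (hS : ∀ d : ℕ, d * c d = ∑ r ∈ Finset.Icc 1 d, S r * c (d - r)) :
    ∃ ω : Fin N → ℂ, ∀ r ≠ 0, S r = -∑ i, ω i ^ r := by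
  classical
  set f : ℂ[X] := ∑ i ∈ Finset.range (N + 1), C (c (N - i)) * X ^ i with hf
  have hcoeff (k : ℕ) (hk : k ≤ N) : f.coeff k = c (N - k) := by
    simp [hf, coeff_C_mul, coeff_X_pow, Nat.lt_succ_of_le hk]
  have hdeg : f.natDegree = N := by
    refine natDegree_eq_of_le_of_coeff_ne_zero ?_ (by simp [hcoeff, hc0])
    refine natDegree_sum_le_of_forall_le _ _ fun i hi ↦ ?_
    exact (natDegree_C_mul_X_pow_le _ _).trans (Nat.lt_succ_iff.1 (Finset.mem_range.1 hi))
  have hlead : f.leadingCoeff = 1 := by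
    rw [leadingCoeff, hdeg, hcoeff N le_rfl, Nat.sub_self, hc0]
  have hcard : Multiset.card f.roots = f.natDegree := IsAlgClosed.card_roots_eq_natDegree
  obtain ⟨ω, hω⟩ : ∃ ω : Fin N → ℂ, Finset.univ.val.map ω = f.roots := by
    have hlen : N = f.roots.toList.length := by rw [Multiset.length_toList, hcard, hdeg]
    refine ⟨fun i ↦ f.roots.toList.get (i.cast hlen), ?_⟩
    rw [Fin.univ_val_map, ← List.ofFn_congr hlen.symm, List.ofFn_get, Multiset.coe_toList]
  have hcω (k : ℕ) : c k = (-1) ^ k * MvPolynomial.aeval ω (MvPolynomial.esymm (Fin N) ℂ k) := by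
    rw [MvPolynomial.aeval_esymm_eq_multiset_esymm, hω]
    rcases le_or_gt k N with hk | hk
    · have h := coeff_eq_esymm_roots_of_card hcard (k := N - k) (by omega)
      rw [hcoeff _ (by omega), hlead, hdeg, Nat.sub_sub_self hk, one_mul] at h
      exact h
    · rw [hc k hk, Multiset.esymm, Multiset.powersetCard_eq_empty _ (by rw [hcard, hdeg]; exact hk)]
      simp
  have hnewton (k : ℕ) : k * c k = ∑ r ∈ Finset.Icc 1 k, -(∑ i, ω i ^ r) * c (k - r) := by
    have h := congrArg (MvPolynomial.aeval ω) (MvPolynomial.mul_esymm_eq_sum (Fin N) ℂ k)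
    simp only [map_mul, map_natCast, map_pow, map_neg, map_one, map_sum] at h
    rw [hcω, mul_left_comm, h, ← mul_assoc, ← pow_add, show k + (k + 1) = 2 * k + 1 by ring,
      pow_succ, pow_mul]
    simp only [even_two, Even.neg_pow, one_pow, one_mul, neg_mul, ← hcω]
    rw [Finset.sum_neg_distrib, neg_inj]
    refine Finset.sum_bij (fun a _ ↦ a.2) ?_ ?_ ?_ ?_
    · intro a ha
      simp only [Finset.mem_filter, Finset.HasAntidiagonal.mem_antidiagonal, Finset.mem_Icc] at ha ⊢
      omega
    · intro a ha b hb h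
      simp only [Finset.mem_filter, Finset.HasAntidiagonal.mem_antidiagonal] at ha hb
      ext <;> omega
    · intro r hr
      rw [Finset.mem_Icc] at hr
      refine ⟨(k - r, r), ?_, rfl⟩
      simp only [Finset.mem_filter, Finset.HasAntidiagonal.mem_antidiagonal]
      omega
    · intro a ha
      simp only [Finset.mem_filter, Finset.HasAntidiagonal.mem_antidiagonal] at ha
      rw [show k - a.2 = a.1 by omega, MvPolynomial.psum, mul_comm]
      simp
  refine ⟨ω, fun r ↦ ?_⟩
  induction r using Nat.strong_induction_on with
  | _ r ih =>
    intro hr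
    have h := (hS r).symm.trans (hnewton r)
    rw [← Finset.sum_erase_add _ _ (Finset.mem_Icc.2 ⟨by omega, le_rfl⟩ : r ∈ Finset.Icc 1 r),
      ← Finset.sum_erase_add (Finset.Icc 1 r) (fun r' ↦ -(∑ i, ω i ^ r') * c (r - r'))
        (Finset.mem_Icc.2 ⟨by omega, le_rfl⟩ : r ∈ Finset.Icc 1 r)] at h
    rw [Finset.sum_congr rfl fun s hs ↦ ?_, add_right_inj, Nat.sub_self, hc0, mul_one, mul_one] at h
    · exact h
    · rw [Finset.mem_erase, Finset.mem_Icc] at hs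
      rw [ih s (by omega) (by omega)]

theorem MulChar.norm_sum_prod_le_of_eq_one {F : Type*} [Field F] [Fintype F] {χ : MulChar F ℂ}
    (hχ : χ ≠ 1) {T : Finset F} {s₀ : F} (hs₀ : s₀ ∈ T) {e : F → ℕ} (he : e s₀ = 1) :
    ‖∑ x : F, ∏ s ∈ T, χ (s - x) ^ e s‖ ≤ (T.card - 1 : ℕ) * √(Fintype.card F) := by
  obtain ⟨S, hS, hSc⟩ := χ.exists_newton_identities T e
  have hT := Finset.card_pos.2 ⟨s₀, hs₀⟩
  set c : ℕ → ℂ := fun d ↦ ∑ g ∈ monicPolys F d, χ.evalProd T e g with hc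
  have hc0 : c 0 = 1 := by simp [hc, monicPolys_zero]
  obtain ⟨ω, hω⟩ := exists_power_sums_of_newton_identities (N := T.card - 1) c S hc0
    (fun d hd ↦ χ.sum_monicPolys_evalProd_eq_zero hχ hs₀ he (by omega)) hSc
  have hS1 : S 1 = ∑ x : F, ∏ s ∈ T, χ (s - x) ^ e s := by
    have h := hSc 1
    rw [← χ.sum_monicPolys_one T e]
    simpa [hc0, monicPolys_zero] using h.symm
  have hq : (0 : ℝ) < Fintype.card F := by exact_mod_cast Fintype.card_pos
  have hz := norm_le_one_of_norm_sum_pow_le (fun i ↦ ω i ^ 2 / (Fintype.card F : ℂ))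
    (2 + 2 * orderOf χ * (T.card + ∑ s ∈ T, e s) + 2 * T.card : ℕ) fun r hr ↦ ?_
  · have hωi (i) : ‖ω i‖ ≤ √(Fintype.card F) := by
      have := hz i
      rw [norm_div, Complex.norm_natCast, div_le_one hq, norm_pow] at this
      exact Real.le_sqrt_of_sq_le this
    rw [← hS1, hω 1 one_ne_zero, norm_neg]
    refine (norm_sum_le_of_le _ (f := fun i ↦ ω i ^ 1) (n := fun _ ↦ √(Fintype.card F))
      fun i _ ↦ by simpa using hωi i).trans_eq ?_
    simp
  · obtain ⟨K, _, _, _, hK, hSK⟩ := hS (2 * r) (by omega)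
    have h := norm_sum_mulChar_norm_le (K := K) χ hχ T hs₀ e he hr hK
    rw [← hSK, hω _ (by omega), norm_neg] at h
    simp_rw [div_pow, ← pow_mul]
    rw [← Finset.sum_div, norm_div, norm_pow, Complex.norm_natCast, div_le_iff₀ (by positivity)]
    exact h

/-- Weil's bound for character sums of products of linear factors. -/
theorem MulChar.norm_sum_prod_le {F : Type*} [Field F] [Fintype F] {χ : MulChar F ℂ}
    (hχ : (orderOf χ).Prime) {T : Finset F} {s₀ : F} (hs₀ : s₀ ∈ T) {e : F → ℕ}
    (he : ¬ orderOf χ ∣ e s₀) :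
    ‖∑ x : F, ∏ s ∈ T, χ (s - x) ^ e s‖ ≤ (T.card - 1 : ℕ) * √(Fintype.card F) := by
  classical
  set m := orderOf χ with hm
  have hm1 := hχ.one_lt
  have he0 : e s₀ ≠ 0 := fun h ↦ he (h ▸ dvd_zero _)
  obtain ⟨b, -, hb⟩ := Nat.exists_mul_mod_eq_one_of_coprime
    ((hχ.coprime_iff_not_dvd.2 he).symm) hm1
  have hb' : e s₀ * b ≡ 1 [MOD m] := by rw [Nat.ModEq, hb, Nat.mod_eq_of_lt hm1]
  have hb0 : b ≠ 0 := by
    rintro rfl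
    simp at hb
  have h := MulChar.norm_sum_prod_le_of_eq_one (χ := χ ^ e s₀)
    (fun h ↦ he (orderOf_dvd_of_pow_eq_one h)) hs₀ (e := fun s ↦ if s = s₀ then 1 else e s * b)
    (if_pos rfl)
  refine (congrArg norm (Finset.sum_congr rfl fun x _ ↦ Finset.prod_congr rfl
    fun s _ ↦ ?_)).trans_le h
  split_ifs with hs
  · rw [hs, pow_one, MulChar.pow_apply' χ he0]
  rw [MulChar.pow_apply' χ he0, ← pow_mul]
  rcases eq_or_ne (s - x) 0 with h0 | h0
  · rw [h0, MulChar.map_zero]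
    rcases eq_or_ne (e s) 0 with h1 | h1
    · simp [h1]
    · rw [zero_pow h1, zero_pow (by positivity)]
  · have h1 : χ (s - x) ^ m = 1 := by
      rw [← MulChar.pow_apply' χ (by omega), hm, pow_orderOf_eq_one, MulChar.one_apply h0.isUnit]
    refine (pow_eq_pow_of_modEq ?_ h1).symm
    simpa [mul_comm, mul_left_comm, mul_assoc] using hb'.mul_left (e s)

theorem MulChar.exists_forall_apply_sub_ne_one {F : Type*} [Field F] [Fintype F] {χ : MulChar F ℂ}
    (hχ : (orderOf χ).Prime) (T : Finset F) (hT : T.card ≤ 10)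
    (hF : 104857600 < Fintype.card F) : ∃ x : F, ∀ s ∈ T, x ≠ s ∧ χ (s - x) ≠ 1 := by
  classical
  by_contra! hcon
  set m := orderOf χ with hm
  set n := T.card with hn
  set Q : ℝ := √(Fintype.card F) with hQ
  have hm1 : 1 < m := hχ.one_lt
  have hmR : (1 : ℝ) ≤ m - 1 := by
    have : (2 : ℝ) ≤ m := by exact_mod_cast hm1
    linarith
  let c : ℕ → ℂ := fun i ↦ if i = 0 then m - 1 else -1
  have hcn (i : ℕ) : ‖c i‖ = if i = 0 then (m - 1 : ℝ) else 1 := by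
    simp only [c]
    split_ifs
    · rw [show (m - 1 : ℂ) = ((m - 1 : ℝ) : ℂ) by push_cast; rfl, Complex.norm_real,
        Real.norm_of_nonneg (by linarith)]
    · simp
  have hsplit : Finset.range m = insert 0 ((Finset.range m).erase 0) :=
    (Finset.insert_erase (Finset.mem_range.2 (by omega))).symm
  have hcard : ((Finset.range m).erase 0).card = m - 1 := by
    rw [Finset.card_erase_of_mem (Finset.mem_range.2 (by omega)), Finset.card_range]
  have hcsum : ∑ i ∈ Finset.range m, ‖c i‖ = 2 * (m - 1 : ℝ) := by
    rw [hsplit, Finset.sum_insert (by simp), Finset.sum_congr rfl fun i hi ↦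
      (hcn i).trans (if_neg (Finset.ne_of_mem_erase hi)), Finset.sum_const, hcard, hcn,
      if_pos rfl, nsmul_eq_mul, Nat.cast_sub hm1.le]
    push_cast
    ring
  let W : F → ℂ := fun a ↦ ∑ i ∈ Finset.range m, c i * χ a ^ i
  have hW1 {a : F} (ha : χ a = 1) : W a = 0 := by
    simp only [W, ha, one_pow, mul_one]
    rw [hsplit, Finset.sum_insert (by simp), Finset.sum_congr rfl fun i hi ↦
      (if_neg (Finset.ne_of_mem_erase hi) : c i = -1), Finset.sum_const, hcard, nsmul_eq_mul,
      Nat.cast_sub hm1.le]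
    simp [c]
  have hWle (a : F) : ‖W a‖ ≤ 2 * (m - 1) := by
    rw [← hcsum]
    refine norm_sum_le_of_le _ fun i _ ↦ ?_
    rw [norm_mul, norm_pow]
    exact mul_le_of_le_one_right (norm_nonneg _)
      (pow_le_one₀ (norm_nonneg _) (χ.norm_apply_le_one a))
  have hupper : ‖∑ x : F, ∏ s : T, W (s - x)‖ ≤ n * (2 * (m - 1)) ^ n := by
    rw [← Finset.sum_subset (Finset.subset_univ T)]
    · refine (norm_sum_le_of_le T (n := fun _ ↦ (2 * (m - 1) : ℝ) ^ n) fun x _ ↦ ?_).trans_eq ?_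
      · rw [norm_prod]
        refine (Finset.prod_le_prod (fun s _ ↦ norm_nonneg _) fun s _ ↦ hWle _).trans_eq ?_
        simp [hn]
      · rw [Finset.sum_const, nsmul_eq_mul]
    · intro x _ hx
      obtain ⟨s, hs, h⟩ := hcon x
      exact Finset.prod_eq_zero (Finset.mem_univ ⟨s, hs⟩)
        (hW1 (h fun hxs ↦ hx (hxs ▸ hs)))
  set A := Fintype.piFinset fun _ : T ↦ Finset.range m with hA
  have h0A : (0 : T → ℕ) ∈ A := by
    rw [hA, Fintype.mem_piFinset]
    exact fun _ ↦ Finset.mem_range.2 (zero_lt_one.trans hm1)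
  have hexpand : ∑ x : F, ∏ s : T, W (s - x) =
      ∑ e ∈ A, (∏ s, c (e s)) * ∑ x : F, ∏ s : T, χ (s - x) ^ e s := by
    simp only [W, Finset.prod_univ_sum, Finset.mul_sum]
    rw [Finset.sum_comm]
    simp only [Finset.prod_mul_distrib, hA]
  have hWeil (e : T → ℕ) (he : e ∈ A.erase 0) :
      ‖∑ x : F, ∏ s : T, χ (s - x) ^ e s‖ ≤ (n - 1 : ℕ) * Q := by
    obtain ⟨he0, heA⟩ := Finset.mem_erase.1 he
    obtain ⟨s₀, hs₀⟩ := Function.ne_iff.1 he0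
    have hlt := Finset.mem_range.1 (Fintype.mem_piFinset.1 heA s₀)
    have h := MulChar.norm_sum_prod_le hχ s₀.2
      (e := fun s ↦ if h : s ∈ T then e ⟨s, h⟩ else 0) (by
        simp only [Subtype.coe_eta, Finset.coe_mem, dite_true]
        exact Nat.not_dvd_of_pos_of_lt (Nat.pos_of_ne_zero hs₀) hlt)
    refine (congrArg norm (Finset.sum_congr rfl fun x _ ↦ ?_)).trans_le h
    refine Eq.trans ?_ (Finset.prod_coe_sort T _)
    exact Finset.prod_congr rfl fun s _ ↦ by simp
  have hcprod : ∑ e ∈ A, ‖∏ s, c (e s)‖ = (2 * (m - 1 : ℝ)) ^ n := by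
    simp_rw [norm_prod]
    rw [hA, ← Finset.prod_univ_sum (fun _ : T ↦ Finset.range m) fun _ i ↦ ‖c i‖]
    simp only [hcsum, Finset.prod_const, Finset.card_univ, Fintype.card_coe, hn]
  have hmain : ‖∏ s : T, c ((0 : T → ℕ) s)‖ = (m - 1 : ℝ) ^ n := by
    simp [hcn, hn]
  have hkey : (m - 1 : ℝ) ^ n * Fintype.card F ≤
      n * (2 * (m - 1)) ^ n + ((2 * (m - 1)) ^ n - (m - 1) ^ n) * ((n - 1 : ℕ) * Q) := by
    rw [hexpand, ← Finset.add_sum_erase _ _ h0A] at hupper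
    have h1 : ‖∑ e ∈ A.erase 0, (∏ s, c (e s)) * ∑ x : F, ∏ s : T, χ (s - x) ^ e s‖ ≤
        ((2 * (m - 1)) ^ n - (m - 1) ^ n) * ((n - 1 : ℕ) * Q) := by
      rw [← hcprod, ← hmain, ← Finset.sum_erase_eq_sub h0A, Finset.sum_mul]
      refine norm_sum_le_of_le _ fun e he ↦ ?_
      rw [norm_mul]
      exact mul_le_mul_of_nonneg_left (hWeil e he) (norm_nonneg _)
    have h2 : ‖(∏ s, c ((0 : T → ℕ) s)) * ∑ x : F, ∏ s : T, χ (s - x) ^ (0 : T → ℕ) s‖ =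
        (m - 1 : ℝ) ^ n * Fintype.card F := by
      rw [norm_mul, hmain]
      simp
    rw [← h2]
    have h3 := norm_sub_le_norm_add
      ((∏ s, c ((0 : T → ℕ) s)) * ∑ x : F, ∏ s : T, χ (s - x) ^ (0 : T → ℕ) s)
      (∑ e ∈ A.erase 0, (∏ s, c (e s)) * ∑ x : F, ∏ s : T, χ (s - x) ^ e s)
    linarith
  have hMpos : (0 : ℝ) < (m - 1) ^ n := by positivity
  have hQsq : (Fintype.card F : ℝ) = Q ^ 2 := (Real.sq_sqrt (by positivity)).symm
  have hQbig : 10240 < Q := by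
    rw [hQ]
    refine Real.lt_sqrt_of_sq_lt ?_
    norm_num
    exact_mod_cast hF
  have hkey' : Q ^ 2 ≤ n * 2 ^ n + (2 ^ n - 1) * ((n - 1 : ℕ) * Q) := by
    rw [hQsq, mul_pow] at hkey
    refine le_of_mul_le_mul_left (hkey.trans_eq ?_) hMpos
    ring
  have hn10 : (n : ℝ) ≤ 10 := by exact_mod_cast hT
  have hn9 : ((n - 1 : ℕ) : ℝ) ≤ 9 := by exact_mod_cast (by omega : n - 1 ≤ 9)
  have h2n : (2 : ℝ) ^ n ≤ 2 ^ 10 := pow_le_pow_right₀ (by norm_num) hT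
  have h4 : (n : ℝ) * 2 ^ n ≤ 10 * 2 ^ 10 := by gcongr
  have h5 : ((2 : ℝ) ^ n - 1) * ((n - 1 : ℕ) * Q) ≤ (2 ^ 10 - 1) * (9 * Q) := by
    gcongr
  nlinarith

theorem card_filter_pow_succ_eq_self_le (F : Type*) [Field F] [Fintype F] [DecidableEq F] {n : ℕ}
    (hn : 0 < n) : (Finset.univ.filter fun c : F ↦ c ^ (n + 1) = c).card ≤ n + 1 := by
  have hsub : (Finset.univ.filter fun c : F ↦ c ^ (n + 1) = c) ⊆
      insert 0 (nthRoots n (1 : F)).toFinset := by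
    intro c hc
    rw [Finset.mem_insert, Multiset.mem_toFinset, mem_nthRoots hn]
    rcases eq_or_ne c 0 with h | h
    · exact .inl h
    · refine .inr (mul_right_cancel₀ h ?_)
      rw [← pow_succ, one_mul]
      exact (Finset.mem_filter.1 hc).2
  refine (Finset.card_le_card hsub).trans ((Finset.card_insert_le _ _).trans ?_)
  exact Nat.succ_le_succ ((Multiset.toFinset_card_le _).trans (card_nthRoots n 1))

theorem exists_finset_sum_tripotent_fourpotent (F : Type*) [Field F] [Fintype F] :
    ∃ S : Finset F, S.card ≤ 10 ∧ ∀ b c : F, b ^ 3 = b → c ^ 4 = c → b + c ∈ S := by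
  classical
  set P := (Finset.univ.filter fun b : F ↦ b ^ 3 = b) ×ˢ Finset.univ.filter fun c : F ↦ c ^ 4 = c
    with hP
  have hmem (x : F × F) : x ∈ P ↔ x.1 ^ 3 = x.1 ∧ x.2 ^ 4 = x.2 := by simp [hP]
  have hPcard : P.card ≤ 12 := by
    rw [hP, Finset.card_product]
    exact Nat.mul_le_mul (card_filter_pow_succ_eq_self_le F two_pos)
      (card_filter_pow_succ_eq_self_le F three_pos)
  have h10 : ((1 : F), (0 : F)) ∈ P := by simp [hmem]
  have h11 : ((-1 : F), (1 : F)) ∈ P.erase (1, 0) := by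
    rw [Finset.mem_erase, hmem]
    refine ⟨by simp, by ring, by ring⟩
  refine ⟨((P.erase (1, 0)).erase (-1, 1)).image fun x ↦ x.1 + x.2, ?_, fun b c hb hc ↦ ?_⟩
  · refine Finset.card_image_le.trans ?_
    rw [Finset.card_erase_of_mem h11, Finset.card_erase_of_mem h10]
    omega
  · rw [Finset.mem_image]
    by_cases h1 : (b, c) = (1, 0)
    · obtain ⟨rfl, rfl⟩ := Prod.mk.inj h1
      exact ⟨(0, 1), by simp [hmem], by simp⟩
    by_cases h2 : (b, c) = (-1, 1)
    · obtain ⟨rfl, rfl⟩ := Prod.mk.inj h2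
      exact ⟨(0, 0), by simp [hmem], by simp⟩
    exact ⟨(b, c), Finset.mem_erase.2 ⟨h2, Finset.mem_erase.2 ⟨h1, (hmem _).2 ⟨hb, hc⟩⟩⟩, rfl⟩

theorem MulChar.apply_eq_one_of_pow_eq_one {F : Type*} [Field F] [Fintype F] (χ : MulChar F ℂ)
    {d : ℕ} (hd : d * orderOf χ ∣ Fintype.card F - 1) {a : F} (ha : a ^ d = 1) (hd0 : d ≠ 0) :
    χ a = 1 := by
  classical
  have ha0 : a ≠ 0 := by
    rintro rfl
    simp [hd0] at ha
  obtain ⟨g, hg⟩ := IsCyclic.exists_generator (α := Fˣ)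
  obtain ⟨j, hj⟩ := Submonoid.mem_powers_iff _ _ |>.1
    (mem_powers_iff_mem_zpowers.2 (hg (Units.mk0 a ha0)))
  have haj : a = (g : F) ^ j := by
    simpa using (congrArg Units.val hj).symm
  have hg1 : orderOf g = Fintype.card F - 1 := by
    rw [orderOf_eq_card_of_forall_mem_zpowers hg, Nat.card_eq_fintype_card, Fintype.card_units]
  have h1 : g ^ (d * j) = 1 := by
    ext
    rw [Units.val_pow_eq_pow_val, mul_comm, pow_mul, ← haj, ha, Units.val_one]
  have h2 : d * orderOf χ ∣ d * j := hd.trans (hg1 ▸ orderOf_dvd_of_pow_eq_one h1)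
  have h3 : χ ^ j = 1 := orderOf_dvd_iff_pow_eq_one.1
    (Nat.dvd_of_mul_dvd_mul_left (Nat.pos_of_ne_zero hd0) h2)
  rw [haj, map_pow, ← MulChar.pow_apply_coe, h3, MulChar.one_apply_coe]

end

/-- If `q > 2²⁰ · 10² = 104857600` is a prime power, then for every `k` with `1 < k < q` and
`(k-1) ∣ (q-1)`, not every element of the finite field with `q` elements is the sum of a
`k`-potent, a `3`-potent and a `4`-potent. -/
theorem not_sum_potent_tripotent_fourpotent_of_large
    (q : ℕ) (hq : IsPrimePow q) (hq' : 104857600 < q)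
    (F : Type*) [Field F] [Fintype F] (hF : Fintype.card F = q) :
    ∀ k : ℕ, 1 < k → k < q → (k - 1) ∣ (q - 1) →
      ¬ (∀ γ : F, ∃ a b c : F, a ^ k = a ∧ b ^ 3 = b ∧ c ^ 4 = c ∧ a + b + c = γ) := by
  classical
  intro k hk hkq hdvd hall
  obtain ⟨t, ht⟩ := hdvd
  have ht1 : t ≠ 1 := by
    rintro rfl
    omega
  obtain ⟨m, hm, u, rfl⟩ := Nat.exists_prime_and_dvd ht1
  obtain ⟨χ, hχ⟩ := MulChar.exists_mulChar_orderOf F (n := m) (R := ℂ)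
    (by rw [hF, ht]; exact Dvd.intro _ (mul_left_comm _ _ _))
    (Complex.isPrimitiveRoot_exp m hm.ne_zero)
  obtain ⟨S, hS, hSmem⟩ := exists_finset_sum_tripotent_fourpotent F
  obtain ⟨x, hx⟩ := MulChar.exists_forall_apply_sub_ne_one (χ := χ) (hχ ▸ hm) (S.image Neg.neg)
    (Finset.card_image_le.trans hS) (hF ▸ hq')
  obtain ⟨a, b, c, ha, hb, hc, habc⟩ := hall (-x)
  obtain ⟨hx1, hx2⟩ := hx _ (Finset.mem_image_of_mem _ (hSmem b c hb hc))
  have hax : -(b + c) - x = a := by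
    rw [sub_eq_add_neg, ← habc]
    ring
  have ha0 : a ≠ 0 := by
    rintro rfl
    exact hx1 (sub_eq_zero.1 hax).symm
  refine hx2 ?_
  rw [hax]
  refine χ.apply_eq_one_of_pow_eq_one (d := k - 1) ?_ (mul_right_cancel₀ ha0 ?_) (by omega)
  · rw [hχ, hF, ht, ← mul_assoc]
    exact dvd_mul_right _ _
  · rw [← pow_succ, Nat.sub_add_cancel hk.le, ha, one_mul]
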